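/- arXiv:2507.06294 — 2 statements merged into one kernel-verified Lean document; each statement's English description precedes it below -/
import Mathlib

section
/- Let q be a complex number with 0 < |q| < 1. Then ((q^2;q^2)_∞ / (q;q)_∞)^3 = (1/((q;q)_∞ (q^2;q^2)_∞)) · Σ_{n=0}^∞ (−1)^n q^{n^2+n} · (1 + q^{2n+1})/(1 − q^{2n+1}). -/
/-!
Write `Q = q ^ 2`. The claim is equivalent to
`∑ (-1)^n q^(n^2+n) (1+q^(2n+1))/(1-q^(2n+1)) = (Q;Q)_∞^4 / (q;q)_∞^2`,
the value at `z = q` of the partial fraction expansion of `(Q;Q)_∞^2 / ((z;Q)_∞ (Q/z;Q)_∞)`, with the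
terms `n` and `-1-n` paired. The proof goes through a finite version. In the variable `t = z + Q/z`
one has `(1 - z Q^j) (1 - Q^(j+1)/z) = Q^j (v_j - t)` with `v_j = Q^(-j) + Q^(j+1)`, so Lagrange
interpolation of the constant `1` at the nodes `v_0, …, v_N`, evaluated at `t = 2 q`, gives
(`finite_partial_fractions`)
`1 / (q;Q)_{N+1}^2 = ∑_{n ≤ N} (-1)^n q^(n^2+n) (1+q^(2n+1))/(1-q^(2n+1)) / ((Q;Q)_{N-n} (Q;Q)_{N+n+1})`.
As `N → ∞`, dominated convergence applies because the numbers `1/(Q;Q)_m` are bounded; the limit is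
the theorem, since `(q;q)_{2N} = (q;Q)_N (Q;Q)_N`.
-/

open Finset

/-- Infinite q-Pochhammer symbol `(a;q)_∞`. -/
noncomputable def qPochInf (a q : ℂ) : ℂ := ∏' j : ℕ, (1 - a * q ^ j)

/-- The finite product `(q;q)_m = (1 - q) (1 - q^2) ⋯ (1 - q^m)`. -/
noncomputable def qFact (q : ℂ) (m : ℕ) : ℂ := ∏ j ∈ range m, (1 - q ^ (j + 1))

/-- The product `(q;q^2)_m = (1 - q) (1 - q^3) ⋯ (1 - q^(2m-1))`. -/
noncomputable def oddFact (q : ℂ) (m : ℕ) : ℂ := ∏ j ∈ range m, (1 - q ^ (2 * j + 1))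

/-- The interpolation nodes `Q^(-j) + Q^(j+1)`, where `Q = q^2`. -/
noncomputable def node (q : ℂ) (j : ℕ) : ℂ := (q ^ (2 * j))⁻¹ + q ^ (2 * j + 2)

lemma one_sub_pow_succ_ne_zero {q : ℂ} (hq1 : ‖q‖ < 1) (m : ℕ) : 1 - q ^ (m + 1) ≠ 0 := by
  intro h
  have h1 : ‖q ^ (m + 1)‖ = 1 := by rw [← sub_eq_zero.mp h, norm_one]
  rw [norm_pow] at h1
  exact absurd h1 (pow_lt_one₀ (norm_nonneg _) hq1 (Nat.succ_ne_zero m)).ne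

lemma norm_sq_lt_one {q : ℂ} (hq1 : ‖q‖ < 1) : ‖q ^ 2‖ < 1 := by
  rw [norm_pow]
  exact pow_lt_one₀ (norm_nonneg _) hq1 two_ne_zero

lemma qFact_ne_zero {q : ℂ} (hq1 : ‖q‖ < 1) (m : ℕ) : qFact q m ≠ 0 :=
  prod_ne_zero_iff.mpr fun j _ => one_sub_pow_succ_ne_zero hq1 j

lemma oddFact_ne_zero {q : ℂ} (hq1 : ‖q‖ < 1) (m : ℕ) : oddFact q m ≠ 0 :=
  prod_ne_zero_iff.mpr fun j _ => one_sub_pow_succ_ne_zero hq1 (2 * j)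

lemma qFact_succ (q : ℂ) (m : ℕ) : qFact q (m + 1) = qFact q m * (1 - q ^ (m + 1)) :=
  prod_range_succ _ _

/-! ### The finite identity -/

lemma node_sub_of_add (q : ℂ) (hq0 : q ≠ 0) (j d : ℕ) :
    (node q (j + d) - node q j) * q ^ (2 * (j + d))
      = (1 - (q ^ 2) ^ d) * (1 - (q ^ 2) ^ (2 * j + d + 1)) := by
  unfold node
  field_simp
  ring

lemma two_mul_sub_node (q : ℂ) (hq0 : q ≠ 0) (j : ℕ) :
    (2 * q - node q j) * q ^ (2 * j) = -(1 - q ^ (2 * j + 1)) ^ 2 := by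
  unfold node
  field_simp
  ring

lemma prod_node_sub_lower (q : ℂ) (hq0 : q ≠ 0) (i : ℕ) :
    (∏ j ∈ range i, (node q i - node q j)) * q ^ (2 * i ^ 2) = qFact (q ^ 2) (2 * i) := by
  have h1 : q ^ (2 * i ^ 2) = ∏ _j ∈ range i, q ^ (2 * i) := by
    rw [prod_const, card_range, ← pow_mul]
    ring_nf
  have h2 : qFact (q ^ 2) (2 * i)
      = (∏ j ∈ range i, (1 - (q ^ 2) ^ (i - 1 - j + 1)))
        * ∏ j ∈ range i, (1 - (q ^ 2) ^ (i + j + 1)) := by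
    rw [prod_range_reflect (fun j => 1 - (q ^ 2) ^ (j + 1)) i, qFact, two_mul, prod_range_add]
  rw [h1, h2, ← prod_mul_distrib, ← prod_mul_distrib]
  refine prod_congr rfl fun j hj => ?_
  obtain ⟨d, rfl⟩ := Nat.exists_eq_add_of_lt (mem_range.mp hj)
  have := node_sub_of_add q hq0 j (d + 1)
  rw [show j + d + 1 - 1 - j + 1 = d + 1 by omega, show j + d + 1 + j + 1 = 2 * j + (d + 1) + 1 by ring]
  exact this

/-- The inverse Lagrange weight at the node `i`, among the nodes `0, …, i + k`. -/
lemma prod_node_sub (q : ℂ) (hq0 : q ≠ 0) (i k : ℕ) :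
    (∏ j ∈ (range (i + k + 1)).erase i, (node q i - node q j))
        * q ^ ((i + k) * (i + k + 1) + i ^ 2) * (1 - (q ^ 2) ^ (2 * i + 1))
      = (-1) ^ k * q ^ i * (qFact (q ^ 2) k * qFact (q ^ 2) (2 * i + k + 1)) := by
  induction k with
  | zero =>
    have h : (range (i + 0 + 1)).erase i = range i := by
      ext j; simp; omega
    rw [h, add_zero, qFact_succ, ← prod_node_sub_lower q hq0 i]
    simp only [qFact, range_zero, prod_empty]
    ring
  | succ k ih =>
    have h : (range (i + (k + 1) + 1)).erase i
        = insert (i + k + 1) ((range (i + k + 1)).erase i) := by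
      ext j; simp; omega
    have hs := node_sub_of_add q hq0 i (k + 1)
    rw [h, prod_insert (by simp), show 2 * i + (k + 1) + 1 = (2 * i + k + 1) + 1 by ring,
      qFact_succ, qFact_succ]
    have e : q ^ ((i + (k + 1)) * (i + (k + 1) + 1) + i ^ 2)
        = q ^ ((i + k) * (i + k + 1) + i ^ 2) * q ^ (2 * (i + (k + 1))) := by
      rw [← pow_add]; ring_nf
    rw [e]
    have e2 : 2 * i + (k + 1) + 1 = 2 * i + k + 1 + 1 := by ring
    rw [e2] at hs
    rw [show i + k + 1 = i + (k + 1) by ring] at *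
    linear_combination (-(node q (i + (k + 1)) - node q i) * q ^ (2 * (i + (k + 1)))) * ih
      - ((-1) ^ k * q ^ i * (qFact (q ^ 2) k * qFact (q ^ 2) (2 * i + k + 1))) * hs

lemma node_injective (q : ℂ) (hq0 : q ≠ 0) (hq1 : ‖q‖ < 1) : Function.Injective (node q) := by
  have key : ∀ j d, node q (j + (d + 1)) ≠ node q j := by
    intro j d h
    have := node_sub_of_add q hq0 j (d + 1)
    rw [h, sub_self, zero_mul] at this
    exact mul_ne_zero (one_sub_pow_succ_ne_zero (norm_sq_lt_one hq1) d)
      (one_sub_pow_succ_ne_zero (norm_sq_lt_one hq1) _) this.symm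
  intro a b h
  rcases lt_trichotomy a b with hab | hab | hab
  · obtain ⟨d, rfl⟩ := Nat.exists_eq_add_of_lt hab
    exact absurd h.symm (key a d)
  · exact hab
  · obtain ⟨d, rfl⟩ := Nat.exists_eq_add_of_lt hab
    exact absurd h (key b d)

lemma prod_two_mul_sub_node (q : ℂ) (hq0 : q ≠ 0) (N : ℕ) :
    (∏ j ∈ range (N + 1), (2 * q - node q j)) * q ^ (N * (N + 1))
      = (-1) ^ (N + 1) * oddFact q (N + 1) ^ 2 := by
  induction N with
  | zero =>
    have := two_mul_sub_node q hq0 0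
    simp [oddFact] at this ⊢
    exact this
  | succ N ih =>
    have ho : oddFact q (N + 1 + 1) = oddFact q (N + 1) * (1 - q ^ (2 * (N + 1) + 1)) :=
      prod_range_succ _ _
    rw [prod_range_succ, ho]
    have hs := two_mul_sub_node q hq0 (N + 1)
    have e : q ^ ((N + 1) * (N + 1 + 1)) = q ^ (N * (N + 1)) * q ^ (2 * (N + 1)) := by
      rw [← pow_add]; ring_nf
    rw [e]
    generalize (∏ j ∈ range (N + 1), (2 * q - node q j)) = M at *
    linear_combination ((2 * q - node q (N + 1)) * q ^ (2 * (N + 1))) * ih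
      + ((-1) ^ (N + 1) * oddFact q (N + 1) ^ 2) * hs

/-- The `n`-th summand of the series. -/
noncomputable def term (q : ℂ) (n : ℕ) : ℂ :=
  (-1 : ℂ) ^ n * q ^ (n ^ 2 + n) * ((1 + q ^ (2 * n + 1)) / (1 - q ^ (2 * n + 1)))

/-- Lagrange interpolation of the constant `1` at the nodes `node q 0, …, node q N`, evaluated at
`2 * q`, where the nodal polynomial is `± q^(-N(N+1)) (q;q^2)_{N+1}^2`. -/
lemma finite_partial_fractions (q : ℂ) (hq0 : q ≠ 0) (hq1 : ‖q‖ < 1) (N : ℕ) :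
    (oddFact q (N + 1) ^ 2)⁻¹ = ∑ n ∈ range (N + 1),
      term q n * ((qFact (q ^ 2) (N - n))⁻¹ * (qFact (q ^ 2) (N + n + 1))⁻¹) := by
  have hx : ∀ i ∈ range (N + 1), 2 * q ≠ node q i := by
    intro i _ h
    have := two_mul_sub_node q hq0 i
    rw [h, sub_self, zero_mul] at this
    exact neg_ne_zero.mpr (pow_ne_zero 2 (one_sub_pow_succ_ne_zero hq1 (2 * i))) this.symm
  have hL := Lagrange.eval_interpolate_not_at_node (s := range (N + 1)) (v := node q) 1 hx
  rw [Lagrange.interpolate_one (node_injective q hq0 hq1).injOn ⟨0, by simp⟩,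
    Polynomial.eval_one, Lagrange.eval_nodal, mul_sum] at hL
  have hD := oddFact_ne_zero hq1 (N + 1)
  refine inv_eq_of_mul_eq_one_right (Eq.trans ?_ hL.symm)
  rw [mul_sum]
  refine sum_congr rfl fun n hn => ?_
  have hX : 2 * q - node q n ≠ 0 := sub_ne_zero.mpr (hx n hn)
  obtain ⟨k, rfl⟩ := Nat.exists_eq_add_of_le (Nat.lt_succ_iff.mp (mem_range.mp hn))
  have hQ := norm_sq_lt_one hq1
  have h1 := prod_two_mul_sub_node q hq0 (n + k)
  have h2 := prod_node_sub q hq0 n k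
  have h3 := two_mul_sub_node q hq0 n
  have hE : ∏ j ∈ (range (n + k + 1)).erase n, (node q n - node q j) ≠ 0 :=
    prod_ne_zero_iff.mpr fun j hj =>
      sub_ne_zero.mpr fun h => (mem_erase.mp hj).1 (node_injective q hq0 hq1 h).symm
  have hp := qFact_ne_zero hQ k
  have hp' := qFact_ne_zero hQ (2 * n + k + 1)
  have hx1 := one_sub_pow_succ_ne_zero hq1 (2 * n)
  have ha : q ^ ((n + k) * (n + k + 1)) ≠ 0 := pow_ne_zero _ hq0
  have hu : q ^ (2 * n) ≠ 0 := pow_ne_zero _ hq0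
  have hb : q ^ n ^ 2 ≠ 0 := pow_ne_zero _ hq0
  rw [Lagrange.nodalWeight, prod_inv_distrib, Pi.one_apply, mul_one, term,
    show n + k - n = k by omega, show n + k + n + 1 = 2 * n + k + 1 by ring]
  have e1 : 1 - (q ^ 2) ^ (2 * n + 1) = (1 - q ^ (2 * n + 1)) * (1 + q ^ (2 * n + 1)) := by ring
  have e2 : q ^ (n ^ 2 + n) = q ^ n ^ 2 * q ^ n := pow_add _ _ _
  have e3 : q ^ (2 * n) = q ^ n * q ^ n := by rw [two_mul, pow_add]
  have e4 : ((-1 : ℂ)) ^ (n + k + 1) = -((-1) ^ n * (-1) ^ k) := by ring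
  rw [pow_add, e1] at h2
  rw [e4] at h1
  rw [e3] at h3 hu
  rw [e2]
  generalize q ^ (2 * n + 1) = x at *
  generalize q ^ ((n + k) * (n + k + 1)) = a at *
  generalize q ^ n ^ 2 = b at *
  generalize q ^ n = r at *
  generalize (∏ j ∈ range (n + k + 1), (2 * q - node q j)) = M at *
  generalize (∏ j ∈ (range (n + k + 1)).erase n, (node q n - node q j)) = E at *
  generalize 2 * q - node q n = X at *
  generalize qFact (q ^ 2) k = p at *
  generalize qFact (q ^ 2) (2 * n + k + 1) = p' at *
  generalize oddFact q (n + k + 1) = D at *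
  generalize (-1 : ℂ) ^ n = s at *
  generalize (-1 : ℂ) ^ k = t at *
  -- The three product formulas `h1`, `h2`, `h3` combine after clearing the powers of `q`.
  have key : D ^ 2 * s * (b * r) * (1 + x) * (E * X) = M * (1 - x) * (p * p') := by
    refine mul_right_cancel₀
      (mul_ne_zero (mul_ne_zero (mul_ne_zero ha hb) hu) hx1) ?_
    linear_combination (D ^ 2 * s * (b * r) * X * r * r) * h2
      + (D ^ 2 * s * b * r * t * r * p * p') * h3 - (b * r * r * (1 - x) ^ 2 * p * p') * h1
  field_simp
  linear_combination key

/-! ### Passage to the limit -/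

lemma tendsto_qFact (q : ℂ) (hq1 : ‖q‖ < 1) :
    Filter.Tendsto (qFact q) Filter.atTop (nhds (qPochInf q q)) := by
  have hs : Summable fun j : ℕ => ‖-q ^ (j + 1)‖ := by
    simpa using (summable_nat_add_iff 1).mpr (summable_geometric_of_lt_one (norm_nonneg _) hq1)
  have := (multipliable_one_add_of_summable hs).tendsto_prod_tprod_nat
  simp only [qPochInf, ← pow_succ', ← sub_eq_add_neg] at this ⊢
  exact this

lemma qPochInf_self_ne_zero (q : ℂ) (hq1 : ‖q‖ < 1) : qPochInf q q ≠ 0 := by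
  have hs : Summable fun j : ℕ => ‖-q ^ (j + 1)‖ := by
    simpa using (summable_nat_add_iff 1).mpr (summable_geometric_of_lt_one (norm_nonneg _) hq1)
  have := tprod_one_add_ne_zero_of_summable (f := fun j : ℕ => -q ^ (j + 1))
    (fun j => by simpa only [← sub_eq_add_neg] using one_sub_pow_succ_ne_zero hq1 j) hs
  simpa only [qPochInf, ← pow_succ', ← sub_eq_add_neg] using this

lemma qFact_two_mul (q : ℂ) (m : ℕ) : qFact q (2 * m) = oddFact q m * qFact (q ^ 2) m := by
  induction m with
  | zero => simp [qFact, oddFact]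
  | succ m ih =>
    rw [show 2 * (m + 1) = 2 * m + 1 + 1 by ring, qFact_succ, qFact_succ, ih, qFact_succ,
      oddFact, oddFact, prod_range_succ]
    ring

lemma tendsto_oddFact (q : ℂ) (hq1 : ‖q‖ < 1) :
    Filter.Tendsto (oddFact q) Filter.atTop
      (nhds (qPochInf q q / qPochInf (q ^ 2) (q ^ 2))) := by
  have hQ := norm_sq_lt_one hq1
  have h1 : Filter.Tendsto (fun m => qFact q (2 * m)) Filter.atTop (nhds (qPochInf q q)) :=
    (tendsto_qFact q hq1).comp (Filter.tendsto_id.const_mul_atTop' two_pos)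
  refine (h1.div (tendsto_qFact _ hQ) (qPochInf_self_ne_zero _ hQ)).congr fun m => ?_
  rw [Pi.div_apply, qFact_two_mul, mul_div_cancel_right₀ _ (qFact_ne_zero hQ m)]

lemma norm_term_le (q : ℂ) (hq1 : ‖q‖ < 1) (n : ℕ) :
    ‖term q n‖ ≤ ‖q‖ ^ n * (2 / (1 - ‖q‖)) := by
  have hle : ‖q‖ ^ (2 * n + 1) ≤ ‖q‖ := pow_le_of_le_one (norm_nonneg _) hq1.le (by omega)
  unfold term
  rw [norm_mul, norm_mul, norm_div, norm_pow, norm_pow, norm_neg, norm_one, one_pow, one_mul]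
  gcongr ?_ * (?_ / ?_)
  · exact pow_le_pow_of_le_one (norm_nonneg _) hq1.le (Nat.le_add_left _ _)
  · refine (norm_add_le _ _).trans ?_
    rw [norm_one, norm_pow]
    linarith
  · have := norm_sub_norm_le 1 (q ^ (2 * n + 1))
    rw [norm_one, norm_pow] at this
    linarith

/-- The limit may be taken termwise: `1 / (q^2;q^2)_m` is bounded in `m`, so the summands are
dominated by a geometric series. -/
lemma tendsto_finite_sum (q : ℂ) (hq1 : ‖q‖ < 1) :
    Filter.Tendsto (fun N => ∑ n ∈ range (N + 1),
      term q n * ((qFact (q ^ 2) (N - n))⁻¹ * (qFact (q ^ 2) (N + n + 1))⁻¹)) Filter.atTop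
      (nhds (∑' n, term q n *
        ((qPochInf (q ^ 2) (q ^ 2))⁻¹ * (qPochInf (q ^ 2) (q ^ 2))⁻¹))) := by
  have hQ := norm_sq_lt_one hq1
  have hinv := (tendsto_qFact _ hQ).inv₀ (qPochInf_self_ne_zero _ hQ)
  obtain ⟨C, hC⟩ := hinv.norm.bddAbove_range
  have hC' : ∀ m, ‖(qFact (q ^ 2) m)⁻¹‖ ≤ C := fun m => hC ⟨m, rfl⟩
  have hC0 : 0 ≤ C := (norm_nonneg _).trans (hC' 0)
  have hsum : ∀ N, ∑ n ∈ range (N + 1),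
      term q n * ((qFact (q ^ 2) (N - n))⁻¹ * (qFact (q ^ 2) (N + n + 1))⁻¹)
      = ∑' n, if n ∈ range (N + 1) then
        term q n * ((qFact (q ^ 2) (N - n))⁻¹ * (qFact (q ^ 2) (N + n + 1))⁻¹) else 0 := by
    intro N
    rw [tsum_eq_sum (s := range (N + 1)) fun n hn => if_neg hn]
    exact sum_congr rfl fun n hn => (if_pos hn).symm
  simp_rw [hsum]
  refine tendsto_tsum_of_dominated_convergence
    (bound := fun n => ‖q‖ ^ n * (2 / (1 - ‖q‖)) * (C * C)) ?_ ?_ ?_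
  · exact ((summable_geometric_of_lt_one (norm_nonneg _) hq1).mul_right _).mul_right _
  · intro n
    have h1 := hinv.comp (Filter.tendsto_sub_atTop_nat n)
    have h2 := hinv.comp (Filter.tendsto_add_atTop_nat (n + 1))
    refine ((h1.mul h2).const_mul (term q n)).congr' ?_
    filter_upwards [Filter.eventually_ge_atTop n] with N hN
    rw [if_pos (mem_range.mpr (Nat.lt_succ_of_le hN))]
    rfl
  · refine Filter.Eventually.of_forall fun N n => ?_
    split_ifs
    · rw [norm_mul, norm_mul]
      gcongr
      · exact norm_term_le q hq1 n
      · exact hC' _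
      · exact hC' _
    · rw [norm_zero]
      have : 0 < 1 - ‖q‖ := by linarith
      positivity

/-- `((q^2;q^2)_∞/(q;q)_∞)^3
    = (1/((q;q)_∞ (q^2;q^2)_∞)) Σ_{n≥0} (−1)^n q^{n^2+n} (1+q^{2n+1})/(1−q^{2n+1})`. -/
theorem statement3 (q : ℂ) (hq0 : 0 < ‖q‖) (hq1 : ‖q‖ < 1) :
    (qPochInf (q ^ 2) (q ^ 2) / qPochInf q q) ^ 3
      = 1 / (qPochInf q q * qPochInf (q ^ 2) (q ^ 2)) *
        ∑' n : ℕ, (-1 : ℂ) ^ n * q ^ (n ^ 2 + n) *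
          ((1 + q ^ (2 * n + 1)) / (1 - q ^ (2 * n + 1))) := by
  have hA := qPochInf_self_ne_zero q hq1
  have hB := qPochInf_self_ne_zero _ (norm_sq_lt_one hq1)
  have hlim := (((tendsto_oddFact q hq1).comp (Filter.tendsto_add_atTop_nat 1)).pow 2).inv₀
    (pow_ne_zero 2 (div_ne_zero hA hB))
  have heq := tendsto_nhds_unique
    (hlim.congr fun N => finite_partial_fractions q (norm_pos_iff.mp hq0) hq1 N)
    (tendsto_finite_sum q hq1)
  rw [tsum_mul_right] at heq
  change _ = _ * ∑' n, term q n
  field_simp at heq ⊢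
  linear_combination heq
end

section
/- Let q be a complex number with 0 < |q| < 1 and let k ≥ 0 be an integer. Then Σ_{n=0}^∞ q^{2n} / ((q^2;q^2)_{n+k} · (q^2;q^2)_n) = (1/((q^2;q^2)_∞)^2) · Σ_{n=0}^∞ (−1)^n q^{n^2 + n + 2kn}. -/
/-!
Put `p = q²`, let `S k` be the series on the left, `T k` the alternating series on the right and
`P = (p;p)_∞`. Shifting the summation index gives `T k = 1 - p^(k+1) T (k+1)`. On the other side,
with `a n = 1 / ((p;p)_{n+k+1} (p;p)_n)`, the `n`-th term of `S k + p^(k+1) S (k+1)` equals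
`a n - a (n-1)` (and `a 0` for `n = 0`), so the series telescopes to `lim a n = 1 / P²`
(`lhs_recurrence`). Hence the defect `D k = P² S k - T k` satisfies `D k = -p^(k+1) D (k+1)`.
Since `1 / (p;p)_n` converges, it is bounded, so `D` is bounded uniformly in `k`; iterating the
recurrence then forces `D = 0` (`eq_zero_of_bounded_of_contract`).
-/

open Finset

/-- Finite q-Pochhammer symbol `(a;q)_n`. -/
noncomputable def qPoch (a q : ℂ) (n : ℕ) : ℂ := ∏ j ∈ Finset.range n, (1 - a * q ^ j)

open Filter Topology

lemma one_sub_mul_pow_ne_zero {p : ℂ} (hp : ‖p‖ < 1) (j : ℕ) : 1 - p * p ^ j ≠ 0 := by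
  intro h
  have h1 : p ^ (j + 1) = 1 := by rw [pow_succ']; exact (sub_eq_zero.mp h).symm
  have h2 : ‖p‖ ^ (j + 1) = 1 := by rw [← norm_pow, h1, norm_one]
  exact absurd h2 (pow_lt_one₀ (norm_nonneg _) hp (Nat.succ_ne_zero j)).ne

lemma qPoch_ne_zero {p : ℂ} (hp : ‖p‖ < 1) (n : ℕ) : qPoch p p n ≠ 0 :=
  Finset.prod_ne_zero_iff.mpr fun j _ => one_sub_mul_pow_ne_zero hp j

lemma qPoch_succ (p : ℂ) (n : ℕ) : qPoch p p (n + 1) = qPoch p p n * (1 - p * p ^ n) := by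
  simp [qPoch, Finset.prod_range_succ]

lemma summable_norm_neg_mul_pow {p : ℂ} (hp : ‖p‖ < 1) :
    Summable fun j : ℕ => ‖-(p * p ^ j)‖ := by
  simp only [norm_neg, norm_mul, norm_pow]
  exact (summable_geometric_of_lt_one (norm_nonneg _) hp).mul_left _

lemma qPochInf_ne_zero {p : ℂ} (hp : ‖p‖ < 1) : qPochInf p p ≠ 0 := by
  have h := tprod_one_add_ne_zero_of_summable (f := fun j : ℕ => -(p * p ^ j))
    (fun j => by simpa [sub_eq_add_neg] using one_sub_mul_pow_ne_zero hp j)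
    (summable_norm_neg_mul_pow hp)
  simpa [qPochInf, sub_eq_add_neg] using h

lemma tendsto_qPoch {p : ℂ} (hp : ‖p‖ < 1) :
    Tendsto (qPoch p p) atTop (𝓝 (qPochInf p p)) := by
  have h := (multipliable_one_add_of_summable (summable_norm_neg_mul_pow hp)).tendsto_prod_tprod_nat
  simp only [← sub_eq_add_neg] at h
  exact h

lemma exists_bound_inv_qPoch {p : ℂ} (hp : ‖p‖ < 1) :
    ∃ C : ℝ, ∀ n, ‖(qPoch p p n)⁻¹‖ ≤ C := by
  have h := (tendsto_qPoch hp).inv₀ (qPochInf_ne_zero hp)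
  obtain ⟨C, hC⟩ := (Metric.isBounded_range_of_tendsto _ h).exists_norm_le
  exact ⟨C, fun n => hC _ ⟨n, rfl⟩⟩

lemma norm_lhs_term_le {p : ℂ} {C : ℝ} (hC : ∀ n, ‖(qPoch p p n)⁻¹‖ ≤ C) (k n : ℕ) :
    ‖p ^ n / (qPoch p p (n + k) * qPoch p p n)‖ ≤ C * C * ‖p‖ ^ n := by
  have hC0 : 0 ≤ C := (norm_nonneg _).trans (hC 0)
  rw [div_eq_mul_inv, mul_inv, norm_mul, norm_mul, norm_pow, mul_comm]
  gcongr
  · exact hC _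
  · exact hC _

lemma summable_lhs {p : ℂ} (hp : ‖p‖ < 1) (k : ℕ) :
    Summable fun n : ℕ => p ^ n / (qPoch p p (n + k) * qPoch p p n) := by
  obtain ⟨C, hC⟩ := exists_bound_inv_qPoch hp
  exact .of_norm_bounded ((summable_geometric_of_lt_one (norm_nonneg _) hp).mul_left _)
    (norm_lhs_term_le hC k)

/-- The partial sums of the combined series telescope to `1 / ((p;p)_{N+k+1} (p;p)_N)`. -/
lemma lhs_partial_sum {p : ℂ} (hp : ‖p‖ < 1) (k N : ℕ) :
    ∑ n ∈ range (N + 1), (p ^ n / (qPoch p p (n + k) * qPoch p p n)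
      + p ^ (k + 1) * (p ^ n / (qPoch p p (n + (k + 1)) * qPoch p p n)))
      = (qPoch p p (N + (k + 1)))⁻¹ * (qPoch p p N)⁻¹ := by
  induction N with
  | zero =>
    have h1 := qPoch_ne_zero hp k
    have h2 := one_sub_mul_pow_ne_zero hp k
    have h0 : qPoch p p 0 = 1 := by simp [qPoch]
    simp only [zero_add, sum_range_one, h0, qPoch_succ]
    field_simp
    ring
  | succ N ih =>
    have h1 := qPoch_ne_zero hp (N + k)
    have h2 := one_sub_mul_pow_ne_zero hp (N + k)
    have h3 := one_sub_mul_pow_ne_zero hp (N + k + 1)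
    have h4 := qPoch_ne_zero hp N
    have h5 := one_sub_mul_pow_ne_zero hp N
    rw [sum_range_succ, ih, show N + 1 + (k + 1) = N + k + 1 + 1 by ring,
      show N + (k + 1) = N + k + 1 by ring, show N + 1 + k = N + k + 1 by ring]
    simp only [qPoch_succ]
    field_simp
    ring

lemma lhs_recurrence {p : ℂ} (hp : ‖p‖ < 1) (k : ℕ) :
    ∑' n : ℕ, p ^ n / (qPoch p p (n + k) * qPoch p p n)
      + p ^ (k + 1) * ∑' n : ℕ, p ^ n / (qPoch p p (n + (k + 1)) * qPoch p p n)
      = (qPochInf p p)⁻¹ * (qPochInf p p)⁻¹ := by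
  have hs := (summable_lhs hp k).hasSum.add ((summable_lhs hp (k + 1)).hasSum.mul_left (p ^ (k + 1)))
  have h1 := (tendsto_add_atTop_iff_nat 1).mpr hs.tendsto_sum_nat
  simp only [lhs_partial_sum hp] at h1
  have h2 := (tendsto_qPoch hp).inv₀ (qPochInf_ne_zero hp)
  exact tendsto_nhds_unique h1 (((tendsto_add_atTop_iff_nat (k + 1)).mpr h2).mul h2)

lemma norm_rhs_term_le {q : ℂ} (hq : ‖q‖ < 1) (k n : ℕ) :
    ‖(-1 : ℂ) ^ n * q ^ (n ^ 2 + n + 2 * k * n)‖ ≤ ‖q‖ ^ n := by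
  rw [norm_mul, norm_pow, norm_neg, norm_one, one_pow, one_mul, norm_pow]
  exact pow_le_pow_of_le_one (norm_nonneg _) hq.le (by nlinarith [Nat.zero_le (2 * k * n)])

lemma rhs_recurrence {q : ℂ} (hq : ‖q‖ < 1) (k : ℕ) :
    ∑' n : ℕ, (-1 : ℂ) ^ n * q ^ (n ^ 2 + n + 2 * k * n)
      = 1 - (q ^ 2) ^ (k + 1) * ∑' n : ℕ, (-1 : ℂ) ^ n * q ^ (n ^ 2 + n + 2 * (k + 1) * n) := by
  have hs : Summable fun n : ℕ => (-1 : ℂ) ^ n * q ^ (n ^ 2 + n + 2 * k * n) :=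
    .of_norm_bounded (summable_geometric_of_lt_one (norm_nonneg _) hq) (norm_rhs_term_le hq k)
  rw [hs.tsum_eq_zero_add, ← tsum_mul_left, sub_eq_add_neg, ← tsum_neg]
  congr 1
  · simp
  · refine tsum_congr fun n => ?_
    ring

/-- A bounded sequence whose terms are dominated by a contraction of their successors vanishes. -/
lemma eq_zero_of_bounded_of_contract {D : ℕ → ℂ} {r M : ℝ} (hr0 : 0 ≤ r) (hr1 : r < 1)
    (hM : ∀ k, ‖D k‖ ≤ M) (hD : ∀ k, ‖D k‖ ≤ r * ‖D (k + 1)‖) (k : ℕ) : D k = 0 := by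
  have h : ∀ j k, ‖D k‖ ≤ r ^ j * M := by
    intro j
    induction j with
    | zero => simpa using hM
    | succ j ih =>
      intro k
      calc ‖D k‖ ≤ r * ‖D (k + 1)‖ := hD k
        _ ≤ r * (r ^ j * M) := by gcongr; exact ih _
        _ = r ^ (j + 1) * M := by ring
  have hl : Tendsto (fun j : ℕ => r ^ j * M) atTop (𝓝 0) := by
    simpa using (tendsto_pow_atTop_nhds_zero_of_lt_one hr0 hr1).mul_const M
  exact norm_le_zero_iff.mp (ge_of_tendsto' hl fun j => h j k)

/-- `Σ_{n≥0} q^{2n}/((q^2;q^2)_{n+k} (q^2;q^2)_n)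
    = (1/((q^2;q^2)_∞)^2) Σ_{n≥0} (−1)^n q^{n^2+n+2kn}`. -/
theorem statement5 (q : ℂ) (hq0 : 0 < ‖q‖) (hq1 : ‖q‖ < 1) (k : ℕ) :
    ∑' n : ℕ, q ^ (2 * n) / (qPoch (q ^ 2) (q ^ 2) (n + k) * qPoch (q ^ 2) (q ^ 2) n)
      = 1 / (qPochInf (q ^ 2) (q ^ 2)) ^ 2 *
        ∑' n : ℕ, (-1 : ℂ) ^ n * q ^ (n ^ 2 + n + 2 * k * n) := by
  have hp : ‖q ^ 2‖ < 1 := by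
    rw [norm_pow]; exact pow_lt_one₀ (norm_nonneg _) hq1 two_ne_zero
  simp only [pow_mul q 2]
  have hT := rhs_recurrence hq1
  have hTb : ∀ k : ℕ, ‖∑' n : ℕ, (-1 : ℂ) ^ n * q ^ (n ^ 2 + n + 2 * k * n)‖ ≤ (1 - ‖q‖)⁻¹ :=
    fun k => tsum_of_norm_bounded (hasSum_geometric_of_lt_one (norm_nonneg _) hq1)
      (norm_rhs_term_le hq1 k)
  generalize q ^ 2 = p at *
  have hP := qPochInf_ne_zero hp
  have hS := lhs_recurrence hp
  obtain ⟨C, hC⟩ := exists_bound_inv_qPoch hp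
  have hSb : ∀ k : ℕ, ‖∑' n : ℕ, p ^ n / (qPoch p p (n + k) * qPoch p p n)‖
      ≤ C * C * (1 - ‖p‖)⁻¹ :=
    fun k => tsum_of_norm_bounded ((hasSum_geometric_of_lt_one (norm_nonneg _) hp).mul_left _)
      (norm_lhs_term_le hC k)
  set S : ℕ → ℂ := fun k => ∑' n : ℕ, p ^ n / (qPoch p p (n + k) * qPoch p p n) with hSdef
  set T : ℕ → ℂ := fun k => ∑' n : ℕ, (-1 : ℂ) ^ n * q ^ (n ^ 2 + n + 2 * k * n) with hTdef
  change ∀ k, T k = 1 - p ^ (k + 1) * T (k + 1) at hT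
  change ∀ k, S k + p ^ (k + 1) * S (k + 1) = _ at hS
  change S k = _ * T k
  set P := qPochInf p p
  have hD : ∀ k, P ^ 2 * S k - T k = -p ^ (k + 1) * (P ^ 2 * S (k + 1) - T (k + 1)) := by
    intro k
    have h1 : P ^ 2 * (P⁻¹ * P⁻¹) = 1 := by field_simp
    linear_combination P ^ 2 * hS k - hT k + h1
  have h0 := eq_zero_of_bounded_of_contract (D := fun k => P ^ 2 * S k - T k)
    (M := ‖P ^ 2‖ * (C * C * (1 - ‖p‖)⁻¹) + (1 - ‖q‖)⁻¹) (norm_nonneg p) hp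
    (fun k => (norm_sub_le _ _).trans (by
      rw [norm_mul]
      gcongr
      · exact hSb k
      · exact hTb k))
    (fun k => by
      rw [hD k, norm_mul, norm_neg, norm_pow]
      gcongr
      exact pow_le_of_le_one (norm_nonneg _) hp.le (Nat.succ_ne_zero k)) k
  have h0' : P ^ 2 * S k = T k := sub_eq_zero.mp h0
  rw [← h0']
  field_simp
end
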